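/- The negation-inversion rule (rule n) is admissible in the calculus N: for every formula 𝔄 and every left side ℭ, if the sequent ℭ → 𝔄̄ is derivable in N, then the sequent 𝔄 ∧ ℭ → (with empty right side) is derivable in N. -/

import Mathlib

/-!
The proof is by induction on the derivation of `ℭ → 𝔄̄`. Only rule (b) introduces a negation on
the right, and its premise is then the sequent `𝔄 ∧ ℭ →` sought. The other rules that can end in
such a sequent act on the left: (d), (f) and (g) keep the right side, so they are reapplied to the
sequent given by the induction hypothesis, with `𝔄` as an additional conjunct; for (e) the premise
is weakened by `𝔄` and the rule applied again with empty right side.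
-/

/-- Formulas of the calculus N over a set `Φ` of prime formulas:
prime formulas, conjunctions, negations, and formal universal
quantifications over ℕ-indexed families. -/
inductive Fml (Φ : Type) : Type
  | prime : Φ → Fml Φ
  | conj : Fml Φ → Fml Φ → Fml Φ
  | neg : Fml Φ → Fml Φ
  | all : (ℕ → Fml Φ) → Fml Φ

/-- The finite conjunction of formulas represented by a formula: a left side
`𝔄₁ ∧ ⋯ ∧ 𝔄ₘ` is regarded up to order and association (rules (h) and (i)),
so it is the multiset of its top-level conjuncts. -/
def Fml.parts {Φ : Type} : Fml Φ → Multiset (Fml Φ)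
  | .conj A B => A.parts + B.parts
  | A => {A}

/-- Derivability of sequents in the calculus N over the prime formulas `Φ`
with valuation `v`. A sequent has a left side which is a finite conjunction
(a multiset, possibly empty) of formulas and a right side which is a formula
or empty (`none`). Exchange and associativity of conjunction on the left
(rules (h) and (i)) are built into the multiset representation. -/
inductive NDer {Φ : Type} (v : Φ → Prop) : Multiset (Fml Φ) → Option (Fml Φ) → Prop
  /-- basic sequents `P → Q` whenever `v P` implies `v Q`. -/
  | basicPQ {P Q : Φ} : (v P → v Q) → NDer v {Fml.prime P} (some (Fml.prime Q))
  /-- basic sequents `→ P` whenever `v P` holds. -/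
  | basicT {P : Φ} : v P → NDer v 0 (some (Fml.prime P))
  /-- basic sequents `P →` whenever `v P` fails. -/
  | basicF {P : Φ} : ¬ v P → NDer v {Fml.prime P} none
  /-- rule (a): from `ℭ → 𝔄` and `ℭ → 𝔅` infer `ℭ → 𝔄 ∧ 𝔅`. -/
  | ruleA {Γ : Multiset (Fml Φ)} {A B : Fml Φ} :
      NDer v Γ (some A) → NDer v Γ (some B) → NDer v Γ (some (Fml.conj A B))
  /-- rule (b): from `𝔄 ∧ ℭ →` infer `ℭ → 𝔄̄`. -/
  | ruleB {Γ : Multiset (Fml Φ)} {A : Fml Φ} :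
      NDer v (A.parts + Γ) none → NDer v Γ (some (Fml.neg A))
  /-- rule (c), the ω-rule: from `ℭ → 𝔄(n)` for every `n` infer `ℭ → (x)𝔄(x)`. -/
  | ruleC {Γ : Multiset (Fml Φ)} {f : ℕ → Fml Φ} :
      (∀ n, NDer v Γ (some (f n))) → NDer v Γ (some (Fml.all f))
  /-- rule (d): from `𝔄 → ℭ` infer `𝔄 ∧ 𝔅 → ℭ` (`ℭ` possibly empty). -/
  | ruleD {Γ : Multiset (Fml Φ)} {C : Option (Fml Φ)} (B : Fml Φ) :
      NDer v Γ C → NDer v (B.parts + Γ) C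
  /-- rule (e): from `𝔄 → 𝔅` infer `𝔄 ∧ 𝔅̄ → ℭ` (`ℭ` possibly empty). -/
  | ruleE {Γ : Multiset (Fml Φ)} {C : Option (Fml Φ)} {B : Fml Φ} :
      NDer v Γ (some B) → NDer v (Fml.neg B ::ₘ Γ) C
  /-- rule (f): from `𝔄(n) ∧ 𝔅 → ℭ` infer `(x)𝔄(x) ∧ 𝔅 → ℭ`. -/
  | ruleF {Γ : Multiset (Fml Φ)} {C : Option (Fml Φ)} {f : ℕ → Fml Φ} (n : ℕ) :
      NDer v ((f n).parts + Γ) C → NDer v (Fml.all f ::ₘ Γ) C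
  /-- rule (g), contraction: from `𝔄 ∧ 𝔄 ∧ 𝔅 → ℭ` infer `𝔄 ∧ 𝔅 → ℭ`. -/
  | ruleG {Γ : Multiset (Fml Φ)} {C : Option (Fml Φ)} {A : Fml Φ} :
      NDer v (A.parts + A.parts + Γ) C → NDer v (A.parts + Γ) C

/-- The negation-inversion rule (rule n) is admissible in the calculus N:
for every formula `𝔄` and every left side `ℭ`, if `ℭ → 𝔄̄` is derivable in N,
then `𝔄 ∧ ℭ →` (with empty right side) is derivable in N. -/
theorem ruleN_admissible {Φ : Type} (v : Φ → Prop)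
    (A : Fml Φ) (Γ : Multiset (Fml Φ))
    (h : NDer v Γ (some (Fml.neg A))) :
    NDer v (A.parts + Γ) none := by
  generalize hC : some (Fml.neg A) = C at h
  induction h with
  | basicPQ _ => cases hC
  | basicT _ => cases hC
  | basicF _ => cases hC
  | ruleA _ _ _ _ => cases hC
  | ruleB h _ => cases hC; exact h
  | ruleC _ _ => cases hC
  | ruleD B _ ih =>
    rw [add_left_comm]
    exact NDer.ruleD B (ih hC)
  | ruleE h _ =>
    -- The right side of the conclusion of (e) is arbitrary, so it can be taken empty.
    rw [Multiset.add_cons]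
    exact NDer.ruleE (NDer.ruleD A h)
  | ruleF n _ ih =>
    rw [Multiset.add_cons]
    refine NDer.ruleF n ?_
    rw [add_left_comm]
    exact ih hC
  | ruleG _ ih =>
    rw [add_left_comm]
    refine NDer.ruleG ?_
    rw [add_left_comm]
    exact ih hC
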